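/- Let p₀ and p₁ be monic complex polynomials of degree n such that at least one of them has only simple roots (i.e., is squarefree). Then there are only finitely many s ∈ [0,1] ⊆ ℝ such that the polynomial p_s = (1−s)·p₀ + s·p₁ has a multiple root, i.e., the set { s ∈ [0,1] | (1−s)·p₀ + s·p₁ is not squarefree } is finite. -/

import Mathlib

/-!
Adjoin a parameter `T` and consider the generic member `(1 - T) p₀ + T p₁` of the pencil as a monic
polynomial over `ℂ[T]`. The resultant of this polynomial and its derivative is an element `R` of
`ℂ[T]`. Since the degree in the main variable is constant along the pencil, `R(t)` is the
resultant of `p_t` and its derivative (`eval_resultant_pencil`), so it vanishes exactly when `p_t`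
has a multiple root (`resultant_pencil_isRoot_iff`). As `p₀` or `p₁` is squarefree, `R` does not
vanish at `0` or does not vanish at `1`; hence `R ≠ 0`, and it has finitely many roots.
-/

open Polynomial in
/-- The pencil `(1 - T) p₀ + T p₁` as a polynomial whose coefficients are polynomials in the
parameter `T`. -/
noncomputable def pencil (p₀ p₁ : ℂ[X]) : ℂ[X][X] :=
  C (1 - X) * p₀.map C + C X * p₁.map C

open Polynomial in
lemma map_eval_pencil (p₀ p₁ : ℂ[X]) (t : ℂ) :
    (pencil p₀ p₁).map (evalRingHom t) = (1 - t) • p₀ + t • p₁ := by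
  have h : (evalRingHom t).comp (C : ℂ →+* ℂ[X]) = RingHom.id ℂ := by ext; simp
  simp [pencil, Polynomial.map_map, h, smul_eq_C_mul]

open Polynomial in
lemma monic_member {n : ℕ} {p₀ p₁ : ℂ[X]} (h₀ : p₀.Monic) (h₁ : p₁.Monic)
    (hd₀ : p₀.natDegree = n) (hd₁ : p₁.natDegree = n) (t : ℂ) :
    ((1 - t) • p₀ + t • p₁).Monic ∧ ((1 - t) • p₀ + t • p₁).natDegree = n := by
  have hc₀ : p₀.coeff n = 1 := hd₀ ▸ h₀
  have hc₁ : p₁.coeff n = 1 := hd₁ ▸ h₁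
  have hle : ((1 - t) • p₀ + t • p₁).natDegree ≤ n :=
    natDegree_add_le_of_degree_le ((natDegree_smul_le _ _).trans hd₀.le)
      ((natDegree_smul_le _ _).trans hd₁.le)
  have hc : ((1 - t) • p₀ + t • p₁).coeff n = 1 := by simp [hc₀, hc₁]
  refine ⟨monic_of_natDegree_le_of_coeff_eq_one n hle hc, hle.antisymm ?_⟩
  exact le_natDegree_of_ne_zero (by simp [hc])

open Polynomial in
/-- The resultant is taken with the formal degrees `n` and `n - 1`, which are the actual degrees of
every member and of its derivative; this is why it commutes with specialisation of `T`. -/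
lemma eval_resultant_pencil {n : ℕ} {p₀ p₁ : ℂ[X]} (h₀ : p₀.Monic) (h₁ : p₁.Monic)
    (hd₀ : p₀.natDegree = n) (hd₁ : p₁.natDegree = n) (t : ℂ) :
    (resultant (pencil p₀ p₁) (derivative (pencil p₀ p₁)) n (n - 1)).eval t =
      resultant ((1 - t) • p₀ + t • p₁) (derivative ((1 - t) • p₀ + t • p₁)) := by
  have hd := (monic_member h₀ h₁ hd₀ hd₁ t).2
  rw [← coe_evalRingHom, ← resultant_map_map, ← derivative_map, map_eval_pencil,
    natDegree_derivative, hd]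

open Polynomial in
lemma resultant_pencil_isRoot_iff {n : ℕ} {p₀ p₁ : ℂ[X]} (h₀ : p₀.Monic) (h₁ : p₁.Monic)
    (hd₀ : p₀.natDegree = n) (hd₁ : p₁.natDegree = n) (t : ℂ) :
    (resultant (pencil p₀ p₁) (derivative (pencil p₀ p₁)) n (n - 1)).IsRoot t ↔
      ¬ Squarefree ((1 - t) • p₀ + t • p₁) := by
  rw [← PerfectField.separable_iff_squarefree, separable_def,
    ← isUnit_resultant_iff_isCoprime (monic_member h₀ h₁ hd₀ hd₁ t).1, isUnit_iff_ne_zero,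
    not_not, IsRoot.def, eval_resultant_pencil h₀ h₁ hd₀ hd₁]

/-- If `p₀` and `p₁` are monic complex polynomials of degree `n` and at least one of them
is squarefree (has only simple roots), then there are only finitely many `s ∈ [0,1]` such
that `p_s = (1−s)·p₀ + s·p₁` has a multiple root (is not squarefree). -/
theorem finite_multiple_root_parameters (n : ℕ) (p₀ p₁ : Polynomial ℂ)
    (h₀ : p₀.Monic) (h₁ : p₁.Monic) (hd₀ : p₀.natDegree = n) (hd₁ : p₁.natDegree = n)
    (hsq : Squarefree p₀ ∨ Squarefree p₁) :
    {s : ℝ | s ∈ Set.Icc (0 : ℝ) 1 ∧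
      ¬ Squarefree ((((1 - s : ℝ) : ℂ)) • p₀ + ((s : ℝ) : ℂ) • p₁)}.Finite := by
  have hroot := resultant_pencil_isRoot_iff h₀ h₁ hd₀ hd₁
  set R := Polynomial.resultant (pencil p₀ p₁) (Polynomial.derivative (pencil p₀ p₁)) n (n - 1)
  have hR : R ≠ 0 := by
    intro hR
    rcases hsq with h | h
    · exact (hroot 0).1 (by simp [hR]) (by simpa using h)
    · exact (hroot 1).1 (by simp [hR]) (by simpa using h)
  refine ((Polynomial.finite_setOfPred_isRoot hR).preimage
    (Complex.ofReal_injective.injOn)).subset ?_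
  rintro s ⟨-, hs⟩
  exact (hroot s).2 (by simpa using hs)
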